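/- Let X ∈ ℝ^{m×n} with m ≥ n, let 0 ≤ ε₁ < 1 and 0 ≤ ε₂ < 1, let Ω₁ ∈ ℝ^{s₁×m} be an ε₁-subspace embedding for the column space of X, and let Ω₂ ∈ ℝ^{s₂×s₁} be an ε₂-subspace embedding for the column space of Ω₁X. Set ε_s = ε₁ + ε₂ − ε₁ε₂ and ε_b = ε₁ + ε₂ + ε₁ε₂. Then √(1−ε_s)·σ_min(X) ≤ σ_min(Ω₂Ω₁X) ≤ ‖Ω₂Ω₁X‖₂ ≤ √(1+ε_b)·‖X‖₂. -/

import Mathlib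

open scoped BigOperators

/-- Euclidean 2-norm of a vector in `Fin m → ℝ`. -/
noncomputable def evNorm {m : ℕ} (x : Fin m → ℝ) : ℝ :=
  Real.sqrt (∑ i, x i ^ 2)

/-- Euclidean inner product of vectors in `Fin m → ℝ`. -/
noncomputable def evInner {m : ℕ} (x y : Fin m → ℝ) : ℝ :=
  ∑ i, x i * y i

/-- `[X]_g`: the maximum Euclidean 2-norm among the columns of `X`. -/
noncomputable def gMax {m n : ℕ} (X : Matrix (Fin m) (Fin n) ℝ) : ℝ :=
  ⨆ j : Fin n, evNorm (fun i => X i j)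

/-- `‖X‖_g = √n · [X]_g` where `n` is the number of columns of `X`. -/
noncomputable def gNorm {m n : ℕ} (X : Matrix (Fin m) (Fin n) ℝ) : ℝ :=
  Real.sqrt n * gMax X

/-- Spectral norm (largest singular value): supremum of `‖Xv‖₂` over unit vectors `v`. -/
noncomputable def matSpectralNorm {m n : ℕ} (X : Matrix (Fin m) (Fin n) ℝ) : ℝ :=
  ⨆ v : {v : Fin n → ℝ // evNorm v = 1}, evNorm (X.mulVec v.1)

/-- Smallest singular value: infimum of `‖Xv‖₂` over unit vectors `v`. -/
noncomputable def sigmaMin {m n : ℕ} (X : Matrix (Fin m) (Fin n) ℝ) : ℝ :=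
  ⨅ v : {v : Fin n → ℝ // evNorm v = 1}, evNorm (X.mulVec v.1)

/-- Frobenius norm of a real matrix. -/
noncomputable def frobeniusNorm {m n : ℕ} (X : Matrix (Fin m) (Fin n) ℝ) : ℝ :=
  Real.sqrt (∑ i, ∑ j, X i j ^ 2)

/-- `Ω` is an `ε`-subspace embedding for the subspace `K ⊆ ℝ^m`. -/
def IsSubspaceEmbedding {s m : ℕ} (ε : ℝ) (Ω : Matrix (Fin s) (Fin m) ℝ)
    (K : Submodule ℝ (Fin m → ℝ)) : Prop :=
  ∀ x ∈ K, ∀ y ∈ K,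
    |evInner x y - evInner (Ω.mulVec x) (Ω.mulVec y)| ≤ ε * evNorm x * evNorm y

/-- Column space of a matrix: the span of its columns. -/
noncomputable def colSpace {m n : ℕ} (X : Matrix (Fin m) (Fin n) ℝ) :
    Submodule ℝ (Fin m → ℝ) :=
  Submodule.span ℝ (Set.range fun j : Fin n => fun i => X i j)

/-!
An embedding of the column space of `X` distorts every `‖Xv‖₂` by a factor between `√(1-ε)` and
`√(1+ε)`, hence distorts both extreme singular values by at most these factors. Two successive
sketches multiply the factors: `(1-ε₁)(1-ε₂) = 1-ε_s` and `(1+ε₁)(1+ε₂) = 1+ε_b`.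
-/

theorem evNorm_nonneg {m : ℕ} (x : Fin m → ℝ) : 0 ≤ evNorm x :=
  Real.sqrt_nonneg _

theorem evInner_self {m : ℕ} (x : Fin m → ℝ) : evInner x x = evNorm x ^ 2 := by
  rw [evNorm, Real.sq_sqrt (Finset.sum_nonneg fun i _ => sq_nonneg (x i))]
  simp only [evInner, sq]

theorem evNorm_mulVec_le_frobeniusNorm_mul {m n : ℕ} (X : Matrix (Fin m) (Fin n) ℝ)
    (v : Fin n → ℝ) : evNorm (X.mulVec v) ≤ frobeniusNorm X * evNorm v := by
  rw [evNorm, frobeniusNorm, evNorm,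
    ← Real.sqrt_mul' _ (Finset.sum_nonneg fun j _ => sq_nonneg (v j)), Finset.sum_mul]
  exact Real.sqrt_le_sqrt <| Finset.sum_le_sum fun i _ =>
    Finset.sum_mul_sq_le_sq_mul_sq Finset.univ (X i) v

theorem mulVec_mem_colSpace {m n : ℕ} (X : Matrix (Fin m) (Fin n) ℝ) (v : Fin n → ℝ) :
    X.mulVec v ∈ colSpace X :=
  X.range_mulVecLin.le ⟨v, rfl⟩

section SingularValues

variable {m p n : ℕ}

theorem bddBelow_range_evNorm_mulVec (X : Matrix (Fin m) (Fin n) ℝ) :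
    BddBelow (Set.range fun v : {v : Fin n → ℝ // evNorm v = 1} => evNorm (X.mulVec v.1)) :=
  ⟨0, Set.forall_mem_range.2 fun _ => evNorm_nonneg _⟩

theorem bddAbove_range_evNorm_mulVec (X : Matrix (Fin m) (Fin n) ℝ) :
    BddAbove (Set.range fun v : {v : Fin n → ℝ // evNorm v = 1} => evNorm (X.mulVec v.1)) :=
  ⟨frobeniusNorm X, Set.forall_mem_range.2 fun v => by
    simpa only [v.2, mul_one] using evNorm_mulVec_le_frobeniusNorm_mul X v.1⟩

theorem sigmaMin_le_matSpectralNorm (X : Matrix (Fin m) (Fin n) ℝ) :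
    sigmaMin X ≤ matSpectralNorm X := by
  cases isEmpty_or_nonempty {v : Fin n → ℝ // evNorm v = 1} with
  | inl _ =>
    -- Without unit vectors (`n = 0`) both extrema take the default value `0`.
    rw [sigmaMin, matSpectralNorm, Real.iInf_of_isEmpty, Real.iSup_of_isEmpty]
  | inr _ => exact ciInf_le_ciSup (bddBelow_range_evNorm_mulVec X) (bddAbove_range_evNorm_mulVec X)

theorem mul_sigmaMin_le_sigmaMin {X : Matrix (Fin m) (Fin n) ℝ} {Y : Matrix (Fin p) (Fin n) ℝ}
    {c : ℝ} (hc : 0 ≤ c) (h : ∀ v, c * evNorm (X.mulVec v) ≤ evNorm (Y.mulVec v)) :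
    c * sigmaMin X ≤ sigmaMin Y := by
  rw [sigmaMin, Real.mul_iInf_of_nonneg hc]
  exact ciInf_mono ⟨0, Set.forall_mem_range.2 fun _ => mul_nonneg hc (evNorm_nonneg _)⟩
    fun v => h v

theorem matSpectralNorm_le_mul_matSpectralNorm {X : Matrix (Fin m) (Fin n) ℝ}
    {Y : Matrix (Fin p) (Fin n) ℝ} {c : ℝ} (hc : 0 ≤ c)
    (h : ∀ v, evNorm (Y.mulVec v) ≤ c * evNorm (X.mulVec v)) :
    matSpectralNorm Y ≤ c * matSpectralNorm X := by
  rw [matSpectralNorm, matSpectralNorm, Real.mul_iSup_of_nonneg hc]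
  have bdd : BddAbove (Set.range fun v : {v : Fin n → ℝ // evNorm v = 1} =>
      c * evNorm (X.mulVec v.1)) :=
    (bddAbove_range_evNorm_mulVec X).range_comp_left (g := (c * ·)) (monotone_mul_left_of_nonneg hc)
  exact ciSup_mono bdd fun v => h v

end SingularValues

namespace IsSubspaceEmbedding

variable {s m n : ℕ} {ε : ℝ} {Ω : Matrix (Fin s) (Fin m) ℝ}

theorem abs_evNorm_sq_sub_le {K : Submodule ℝ (Fin m → ℝ)} (h : IsSubspaceEmbedding ε Ω K)
    {x : Fin m → ℝ} (hx : x ∈ K) :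
    |evNorm x ^ 2 - evNorm (Ω.mulVec x) ^ 2| ≤ ε * evNorm x ^ 2 := by
  simpa only [evInner_self, mul_assoc, ← sq] using h x hx x hx

theorem sqrt_one_sub_mul_evNorm_le {K : Submodule ℝ (Fin m → ℝ)} (h : IsSubspaceEmbedding ε Ω K)
    {x : Fin m → ℝ} (hx : x ∈ K) :
    Real.sqrt (1 - ε) * evNorm x ≤ evNorm (Ω.mulVec x) := by
  rw [← Real.sqrt_sq (evNorm_nonneg x), ← Real.sqrt_mul' _ (sq_nonneg _)]
  refine Real.sqrt_le_iff.2 ⟨evNorm_nonneg _, ?_⟩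
  linarith [(abs_le.1 (h.abs_evNorm_sq_sub_le hx)).2]

theorem evNorm_mulVec_le {K : Submodule ℝ (Fin m → ℝ)} (h : IsSubspaceEmbedding ε Ω K)
    {x : Fin m → ℝ} (hx : x ∈ K) :
    evNorm (Ω.mulVec x) ≤ Real.sqrt (1 + ε) * evNorm x := by
  rw [← Real.sqrt_sq (evNorm_nonneg x), ← Real.sqrt_mul' _ (sq_nonneg _)]
  refine Real.le_sqrt_of_sq_le ?_
  linarith [(abs_le.1 (h.abs_evNorm_sq_sub_le hx)).1]

variable {X : Matrix (Fin m) (Fin n) ℝ}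

theorem sqrt_one_sub_mul_sigmaMin_le (h : IsSubspaceEmbedding ε Ω (colSpace X)) :
    Real.sqrt (1 - ε) * sigmaMin X ≤ sigmaMin (Ω * X) :=
  mul_sigmaMin_le_sigmaMin (Real.sqrt_nonneg _) fun v => by
    simpa only [Matrix.mulVec_mulVec] using h.sqrt_one_sub_mul_evNorm_le (mulVec_mem_colSpace X v)

theorem matSpectralNorm_mul_le (h : IsSubspaceEmbedding ε Ω (colSpace X)) :
    matSpectralNorm (Ω * X) ≤ Real.sqrt (1 + ε) * matSpectralNorm X :=
  matSpectralNorm_le_mul_matSpectralNorm (Real.sqrt_nonneg _) fun v => by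
    simpa only [Matrix.mulVec_mulVec] using h.evNorm_mulVec_le (mulVec_mem_colSpace X v)

end IsSubspaceEmbedding

theorem multiSketch_sigmaMin_bounds_general {s₁ s₂ m n : ℕ} {ε₁ ε₂ : ℝ}
    (hε₁0 : 0 ≤ ε₁) (hε₁1 : ε₁ ≤ 1) {X : Matrix (Fin m) (Fin n) ℝ}
    {Ω₁ : Matrix (Fin s₁) (Fin m) ℝ} {Ω₂ : Matrix (Fin s₂) (Fin s₁) ℝ}
    (hΩ₁ : IsSubspaceEmbedding ε₁ Ω₁ (colSpace X))
    (hΩ₂ : IsSubspaceEmbedding ε₂ Ω₂ (colSpace (Ω₁ * X))) :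
    Real.sqrt (1 - (ε₁ + ε₂ - ε₁ * ε₂)) * sigmaMin X ≤ sigmaMin (Ω₂ * Ω₁ * X) ∧
      sigmaMin (Ω₂ * Ω₁ * X) ≤ matSpectralNorm (Ω₂ * Ω₁ * X) ∧
        matSpectralNorm (Ω₂ * Ω₁ * X) ≤
          Real.sqrt (1 + (ε₁ + ε₂ + ε₁ * ε₂)) * matSpectralNorm X := by
  have sqrt_lower : Real.sqrt (1 - (ε₁ + ε₂ - ε₁ * ε₂)) =
      Real.sqrt (1 - ε₂) * Real.sqrt (1 - ε₁) := by
    rw [← Real.sqrt_mul' _ (sub_nonneg.2 hε₁1)]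
    ring_nf
  have sqrt_upper : Real.sqrt (1 + (ε₁ + ε₂ + ε₁ * ε₂)) =
      Real.sqrt (1 + ε₂) * Real.sqrt (1 + ε₁) := by
    rw [← Real.sqrt_mul' _ (by positivity)]
    ring_nf
  refine ⟨?_, sigmaMin_le_matSpectralNorm _, ?_⟩
  · calc Real.sqrt (1 - (ε₁ + ε₂ - ε₁ * ε₂)) * sigmaMin X
        = Real.sqrt (1 - ε₂) * (Real.sqrt (1 - ε₁) * sigmaMin X) := by rw [sqrt_lower, mul_assoc]
      _ ≤ Real.sqrt (1 - ε₂) * sigmaMin (Ω₁ * X) := by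
        gcongr; exact hΩ₁.sqrt_one_sub_mul_sigmaMin_le
      _ ≤ sigmaMin (Ω₂ * (Ω₁ * X)) := hΩ₂.sqrt_one_sub_mul_sigmaMin_le
      _ = sigmaMin (Ω₂ * Ω₁ * X) := by rw [Matrix.mul_assoc]
  · calc matSpectralNorm (Ω₂ * Ω₁ * X)
        = matSpectralNorm (Ω₂ * (Ω₁ * X)) := by rw [Matrix.mul_assoc]
      _ ≤ Real.sqrt (1 + ε₂) * matSpectralNorm (Ω₁ * X) := hΩ₂.matSpectralNorm_mul_le
      _ ≤ Real.sqrt (1 + ε₂) * (Real.sqrt (1 + ε₁) * matSpectralNorm X) := by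
        gcongr; exact hΩ₁.matSpectralNorm_mul_le
      _ = Real.sqrt (1 + (ε₁ + ε₂ + ε₁ * ε₂)) * matSpectralNorm X := by rw [sqrt_upper, mul_assoc]

/-- Multi-sketching, singular values: for `m ≥ n`,
`√(1−ε_s)·σ_min(X) ≤ σ_min(Ω₂Ω₁X) ≤ ‖Ω₂Ω₁X‖₂ ≤ √(1+ε_b)·‖X‖₂`. -/
theorem multiSketch_sigmaMin_bounds {s₁ s₂ m n : ℕ} {ε₁ ε₂ : ℝ}
    (hmn : m ≥ n)
    (hε₁0 : 0 ≤ ε₁) (hε₁1 : ε₁ < 1) (hε₂0 : 0 ≤ ε₂) (hε₂1 : ε₂ < 1)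
    (X : Matrix (Fin m) (Fin n) ℝ)
    (Ω₁ : Matrix (Fin s₁) (Fin m) ℝ) (Ω₂ : Matrix (Fin s₂) (Fin s₁) ℝ)
    (hΩ₁ : IsSubspaceEmbedding ε₁ Ω₁ (colSpace X))
    (hΩ₂ : IsSubspaceEmbedding ε₂ Ω₂ (colSpace (Ω₁ * X))) :
    Real.sqrt (1 - (ε₁ + ε₂ - ε₁ * ε₂)) * sigmaMin X ≤ sigmaMin (Ω₂ * Ω₁ * X) ∧
      sigmaMin (Ω₂ * Ω₁ * X) ≤ matSpectralNorm (Ω₂ * Ω₁ * X) ∧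
        matSpectralNorm (Ω₂ * Ω₁ * X) ≤
          Real.sqrt (1 + (ε₁ + ε₂ + ε₁ * ε₂)) * matSpectralNorm X := by
  exact multiSketch_sigmaMin_bounds_general hε₁0 hε₁1.le hΩ₁ hΩ₂
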